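/- Conjunctive Bounding Lemma, part (ii): Let U_1 and U_2 be two TA templates with conjunctive guards, let Φ(1_1) be an IMTL formula over the first instance of U_1, and let Q ∈ {E, E_inf, E_fin}. Set c_1 = 1 if Q = E_inf, c_1 = 1 if Q = E_fin, and c_1 = 2|U_2| if Q = E. Then for every n ≥ c_1: if (U_1,U_2)^{(1,n)} ⊨ Q Φ(1_1) then (U_1,U_2)^{(1,c_1)} ⊨ Q Φ(1_1). -/

import Mathlib

open scoped ENNReal NNReal

namespace PNTA

/-! ### Basic ingredients: comparisons and clock constraints -/

/-- Comparison operators `<, ≤, >, ≥, =`. -/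
inductive Cmp : Type
  | lt | le | gt | ge | eq

/-- Evaluation of a comparison operator on nonnegative reals. -/
def Cmp.eval : Cmp → NNReal → NNReal → Prop
  | .lt, a, b => a < b
  | .le, a, b => a ≤ b
  | .gt, a, b => b < a
  | .ge, a, b => b ≤ a
  | .eq, a, b => a = b

/-- Clock constraints `TC(C)`: Boolean combinations of comparisons of clocks with
clocks or with nonnegative rational constants. -/
inductive ClockConstraint (C : Type) : Type
  | tt
  | neg (g : ClockConstraint C)
  | disj (g₁ g₂ : ClockConstraint C)
  | cmpClock (op : Cmp) (c₁ c₂ : C)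
  | cmpConst (op : Cmp) (c : C) (q : ℚ≥0)

/-- Satisfaction of a clock constraint by a clock valuation. -/
def ClockConstraint.sat {C : Type} (u : C → NNReal) : ClockConstraint C → Prop
  | .tt => True
  | .neg g => ¬ g.sat u
  | .disj g₁ g₂ => g₁.sat u ∨ g₂.sat u
  | .cmpClock op c₁ c₂ => op.eval (u c₁) (u c₂)
  | .cmpConst op c q => op.eval (u c) (q : NNReal)

/-! ### Parameterized networks of timed automata with conjunctive guards -/

/-- A parameterized network of `k` timed automaton templates
`U_l = ⟨S_l, ŝ_l, C_l, Γ_l, τ_l, I_l⟩` with **conjunctive guards**.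
A conjunctive guard assigns to every template `h` a set of states of `U_h`
(the disjunction `ŝ_h ∨ s_h¹ ∨ ⋯`), which must contain the initial state `ŝ_h`;
it is satisfied by a global state when every *other* instance of every template `h`
is in a state belonging to the corresponding set. -/
structure ConjPNTA (k : ℕ) : Type 1 where
  /-- states of each template -/
  State : Fin k → Type
  stateFintype : ∀ l, Fintype (State l)
  /-- initial state of each template -/
  init : ∀ l, State l
  /-- clock variables of each template -/
  Clock : Fin k → Type
  clockFintype : ∀ l, Fintype (Clock l)
  /-- transitions `s —(g,r,γ)→ t`: source, clock constraint, reset set, conjunctive guard, target -/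
  trans : ∀ l, Set (State l × ClockConstraint (Clock l) × Set (Clock l) ×
      ((h : Fin k) → Set (State h)) × State l)
  trans_finite : ∀ l, (trans l).Finite
  /-- guards are conjunctive: every disjunct contains the initial state -/
  guards_conj : ∀ l tr, tr ∈ trans l → ∀ h, init h ∈ tr.2.2.2.1 h
  /-- state invariants -/
  inv : ∀ l, State l → ClockConstraint (Clock l)
  inv_init : ∀ l, inv l (init l) = ClockConstraint.tt

variable {k : ℕ}

/-- `|U_l|`: the number of states of template `l`. -/
def ConjPNTA.size (A : ConjPNTA k) (l : Fin k) : ℕ :=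
  @Fintype.card (A.State l) (A.stateFintype l)

lemma ConjPNTA.size_pos (A : ConjPNTA k) (l : Fin k) : 0 < A.size l :=
  @Fintype.card_pos _ (A.stateFintype l) ⟨A.init l⟩

/-- A configuration of the PNTA `(U_1,…,U_k)^{(n_1,…,n_k)}`: each instance `U_l^i`
(`l < k`, `i < n_l`) has a current state and a clock valuation satisfying the
invariant of that state. -/
structure Config (A : ConjPNTA k) (n : Fin k → ℕ) : Type where
  st : ∀ l, Fin (n l) → A.State l
  cl : ∀ l, Fin (n l) → A.Clock l → NNReal
  inv_sat : ∀ l i, (A.inv l (st l i)).sat (cl l i)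

/-- The initial configuration: every instance in its initial state, all clocks `0`. -/
def initConfig (A : ConjPNTA k) (n : Fin k → ℕ) : Config A n where
  st := fun l _ => A.init l
  cl := fun _ _ _ => 0
  inv_sat := fun l _ => by rw [A.inv_init l]; exact trivial

/-- The global state of configuration `c` satisfies the conjunctive guard `γ`
from the point of view of instance `(l, i)`: every other instance is in one of
the allowed states. -/
def guardSat {A : ConjPNTA k} {n : Fin k → ℕ} (c : Config A n) (l : Fin k) (i : Fin (n l))
    (γ : (h : Fin k) → Set (A.State h)) : Prop :=
  ∀ p : Σ h, Fin (n h), p ≠ ⟨l, i⟩ → c.st p.1 p.2 ∈ γ p.1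

/-- Delay transition `c →d c'`: all clocks of all instances advance by `d`,
states are unchanged, and all invariants hold throughout the delay. -/
def DelayStep {A : ConjPNTA k} {n : Fin k → ℕ} (d : NNReal) (c c' : Config A n) : Prop :=
  c'.st = c.st ∧
  (∀ l i x, c'.cl l i x = c.cl l i x + d) ∧
  (∀ l i (d' : NNReal), d' ≤ d → (A.inv l (c.st l i)).sat fun x => c.cl l i x + d')

/-- Synchronization transition `c →γ c'`: exactly one instance `U_l^i` fires a
transition `s —(g,r,γ)→ t` of `τ_l`; its current state is `s`, its clocks satisfy `g`,
the global state satisfies the conjunctive guard `γ`, its clocks in `r` are reset to 0,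
and all other instances are unchanged. -/
def SyncStep {A : ConjPNTA k} {n : Fin k → ℕ} (c c' : Config A n) : Prop :=
  ∃ (l : Fin k) (i : Fin (n l)), ∃ tr ∈ A.trans l,
    tr.1 = c.st l i ∧
    tr.2.1.sat (c.cl l i) ∧
    guardSat c l i tr.2.2.2.1 ∧
    c'.st l i = tr.2.2.2.2 ∧
    (∀ x, (x ∈ tr.2.2.1 → c'.cl l i x = 0) ∧ (x ∉ tr.2.2.1 → c'.cl l i x = c.cl l i x)) ∧
    (∀ p : Σ h, Fin (n h), p ≠ ⟨l, i⟩ → c'.st p.1 p.2 = c.st p.1 p.2 ∧ c'.cl p.1 p.2 = c.cl p.1 p.2)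

/-- A step of a timed computation: a delay transition with positive delay
(time advances accordingly) or a synchronization transition (time unchanged). -/
def Step {A : ConjPNTA k} {n : Fin k → ℕ} (c c' : Config A n) (t t' : NNReal) : Prop :=
  (∃ d : NNReal, 0 < d ∧ DelayStep d c c' ∧ t' = t + d) ∨ (SyncStep c c' ∧ t' = t)

/-- A timed computation starting at configuration `c₀` at time `0`: a finite or
infinite sequence of configuration/time pairs (represented as a partial function
on positions with downward closed domain) whose consecutive elements are related
by delay or synchronization transitions. -/
structure TimedComp (A : ConjPNTA k) (n : Fin k → ℕ) (c₀ : Config A n) : Type where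
  seq : ℕ → Option (Config A n × NNReal)
  zero_def : seq 0 = some (c₀, 0)
  downward : ∀ v, (seq (v + 1)).isSome → (seq v).isSome
  step : ∀ v c t c' t', seq v = some (c, t) → seq (v + 1) = some (c', t') → Step c c' t t'

namespace TimedComp

variable {A : ConjPNTA k} {n : Fin k → ℕ} {c₀ : Config A n}

/-- An infinite timed computation. -/
def Infinite (x : TimedComp A n c₀) : Prop := ∀ v, (x.seq v).isSome

/-- A (not necessarily maximal) finite timed computation. -/
def Finite (x : TimedComp A n c₀) : Prop := ∃ v, x.seq v = none

/-- A deadlocked timed computation: maximal finite, i.e. all transitions are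
disabled at its final configuration. -/
def Deadlocked (x : TimedComp A n c₀) : Prop :=
  ∃ v c t, x.seq v = some (c, t) ∧ x.seq (v + 1) = none ∧
    ∀ c' : Config A n, ¬ ((∃ d : NNReal, 0 < d ∧ DelayStep d c c') ∨ SyncStep c c')

/-- The time stamp at position `v` (junk value `0` outside the domain). -/
def timeAt (x : TimedComp A n c₀) (v : ℕ) : NNReal := ((x.seq v).map Prod.snd).getD 0

end TimedComp

/-! ### s-paths (continuous-time signals induced by timed computations) -/

/-- An s-path: a continuous-time signal of configurations, together with its
(possibly infinite) length. -/
structure SPath (A : ConjPNTA k) (n : Fin k → ℕ) : Type where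
  len : ℝ≥0∞
  toFun : NNReal → Config A n

/-- The suffix `ρ⌊t` of an s-path. -/
noncomputable def SPath.suffix {A : ConjPNTA k} {n : Fin k → ℕ} (ρ : SPath A n) (t : NNReal) : SPath A n where
  len := ρ.len - (t : ℝ≥0∞)
  toFun := fun s => ρ.toFun (t + s)

/-- The timed computation `x` induces the s-path `ρ`: for every step of `x` from
`(c_v,t_v)` to `(c_{v+1},t_{v+1})` and every time `s ∈ [t_v, t_{v+1})`, `ρ(s)` has
the states of `c_v` with clocks advanced by `s - t_v`; the length of `ρ` is the
supremum of the time stamps (for an infinite computation), resp. the final time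
stamp (for a finite one, at which the final configuration persists). -/
def Induces {A : ConjPNTA k} {n : Fin k → ℕ} {c₀ : Config A n}
    (x : TimedComp A n c₀) (ρ : SPath A n) : Prop :=
  (∀ v c t c' t', x.seq v = some (c, t) → x.seq (v + 1) = some (c', t') →
    ∀ s : NNReal, t ≤ s → s < t' →
      (ρ.toFun s).st = c.st ∧ ∀ l i cx, (ρ.toFun s).cl l i cx = c.cl l i cx + (s - t)) ∧
  (x.Infinite → ρ.len = ⨆ v, (x.timeAt v : ℝ≥0∞)) ∧
  (∀ v c t, x.seq v = some (c, t) → x.seq (v + 1) = none →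
    ρ.len = (t : ℝ≥0∞) ∧ (ρ.toFun t).st = c.st ∧ ∀ l i cx, (ρ.toFun t).cl l i cx = c.cl l i cx)

/-- `tcomp(ρ)`: the set of timed computations (from `c₀`) inducing the s-path `ρ`. -/
def tcomp {A : ConjPNTA k} {n : Fin k → ℕ} (c₀ : Config A n) (ρ : SPath A n) :
    Set (TimedComp A n c₀) :=
  {x | Induces x ρ}

/-- `|ρ| = ω` : `ρ` is (induced by) an infinite timed computation from `c₀`. -/
def SPath.IsInfiniteFrom {A : ConjPNTA k} {n : Fin k → ℕ} (c₀ : Config A n) (ρ : SPath A n) : Prop :=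
  ∃ x : TimedComp A n c₀, Induces x ρ ∧ x.Infinite

/-- `|ρ| < ω` : `ρ` is induced by a finite timed computation from `c₀`. -/
def SPath.IsFiniteFrom {A : ConjPNTA k} {n : Fin k → ℕ} (c₀ : Config A n) (ρ : SPath A n) : Prop :=
  ∃ x : TimedComp A n c₀, Induces x ρ ∧ x.Finite

/-- `deadlock(ρ)` : `ρ` is induced by a deadlocked timed computation from `c₀`. -/
def SPath.IsDeadlockedFrom {A : ConjPNTA k} {n : Fin k → ℕ} (c₀ : Config A n) (ρ : SPath A n) : Prop :=
  ∃ x : TimedComp A n c₀, Induces x ρ ∧ x.Deadlocked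

/-! ### IMTL formulae and their continuous-time semantics -/

/-- IMTL path formulae over atomic propositions `α`: built from `⊤` and atoms by
Boolean operators (`∧`, `¬`) and time-constrained until `Φ U_{∼q} Ψ` with
`∼ ∈ {<,≤,>,≥,=}` and `q ∈ ℚ≥0`. -/
inductive IMTL (α : Type) : Type
  | tt
  | atom (a : α)
  | and (φ ψ : IMTL α)
  | not (φ : IMTL α)
  | untl (op : Cmp) (q : ℚ≥0) (φ ψ : IMTL α)

/-- Satisfaction of an IMTL path formula on an s-path, given a valuation of the
atomic propositions on configurations. -/
def satIMTL {A : ConjPNTA k} {n : Fin k → ℕ} {α : Type} (val : α → Config A n → Prop) :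
    IMTL α → SPath A n → Prop
  | .tt, _ => True
  | .atom a, ρ => val a (ρ.toFun 0)
  | .and φ ψ, ρ => satIMTL val φ ρ ∧ satIMTL val ψ ρ
  | .not φ, ρ => ¬ satIMTL val φ ρ
  | .untl op q φ ψ, ρ => ∃ t' : NNReal, (t' : ℝ≥0∞) ≤ ρ.len ∧ op.eval t' (q : NNReal) ∧
      satIMTL val ψ (ρ.suffix t') ∧ ∀ t : NNReal, t < t' → satIMTL val φ (ρ.suffix t)

/-- The six path quantifiers `A, A_inf, A_fin, E, E_inf, E_fin`. -/
inductive PathQ : Type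
  | A | Ainf | Afin | E | Einf | Efin

/-- `(U_1,…,U_k)^{(n_1,…,n_k)} ⊨ Q Φ` for a path quantifier `Q`: quantification over
the s-paths from the initial configuration that are infinite or deadlocked (`A`, `E`),
infinite (`A_inf`, `E_inf`), resp. finite (`A_fin`, `E_fin`). -/
def SatQ (A : ConjPNTA k) (n : Fin k → ℕ) {α : Type} (val : α → Config A n → Prop)
    (Q : PathQ) (Φ : IMTL α) : Prop :=
  match Q with
  | .A => ∀ ρ : SPath A n,
      (ρ.IsInfiniteFrom (initConfig A n) ∨ ρ.IsDeadlockedFrom (initConfig A n)) → satIMTL val Φ ρ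
  | .Ainf => ∀ ρ : SPath A n, ρ.IsInfiniteFrom (initConfig A n) → satIMTL val Φ ρ
  | .Afin => ∀ ρ : SPath A n, ρ.IsFiniteFrom (initConfig A n) → satIMTL val Φ ρ
  | .E => ∃ ρ : SPath A n,
      (ρ.IsInfiniteFrom (initConfig A n) ∨ ρ.IsDeadlockedFrom (initConfig A n)) ∧ satIMTL val Φ ρ
  | .Einf => ∃ ρ : SPath A n, ρ.IsInfiniteFrom (initConfig A n) ∧ satIMTL val Φ ρ
  | .Efin => ∃ ρ : SPath A n, ρ.IsFiniteFrom (initConfig A n) ∧ satIMTL val Φ ρ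

/-- Atomic propositions of the indexed formula `Φ(i_{l₁},…,i_{l_h})`: a quantified
slot `j < h` together with a state (= atomic proposition) of template `l_j`. -/
def Atoms (A : ConjPNTA k) {h : ℕ} (l : Fin h → Fin k) : Type :=
  Σ j : Fin h, A.State (l j)

/-- The valuation of the atoms, given an assignment `inst` of concrete instances to
the quantified slots: `p(l_j, i_{l_j})` holds iff instance `i_{l_j}` of template `l_j`
is in state `p`. -/
def atomVal (A : ConjPNTA k) (n : Fin k → ℕ) {h : ℕ} (l : Fin h → Fin k)
    (inst : ∀ j : Fin h, Fin (n (l j))) : Atoms A l → Config A n → Prop :=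
  fun a c => c.st (l a.1) (inst a.1) = a.2

/-- `(U_1,…,U_k)^{(n_1,…,n_k)} ⊨ ⋀_{i_{l₁},…,i_{l_h}} Q Φ(i_{l₁},…,i_{l_h})`. -/
def SatFormula (A : ConjPNTA k) (n : Fin k → ℕ) {h : ℕ} (l : Fin h → Fin k)
    (Q : PathQ) (Φ : IMTL (Atoms A l)) : Prop :=
  ∀ inst : ∀ j : Fin h, Fin (n (l j)), SatQ A n (atomVal A n l inst) Q Φ

/-! ### Helpers for networks of two templates -/

/-- The size function of the system `(U₁,U₂)^{(a,b)}`. -/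
def two (a b : ℕ) : Fin 2 → ℕ := fun m => if m.val = 0 then a else b

/-- The valuation interpreting the atoms of a formula `Φ(1_t)` over the *first*
instance of template `t`. -/
def valFirst (A : ConjPNTA 2) (n : Fin 2 → ℕ) (t : Fin 2) (hp : 0 < n t) :
    A.State t → Config A n → Prop :=
  fun p c => c.st t ⟨0, hp⟩ = p


/-! ### Cutoffs for two-template systems -/

/-- Cutoff for the template tracked by the formula `Φ(1₂)` (part (i)):
`2` for `E_inf`, `1` for `E_fin`, `2|U₂| + 1` for `E`. -/
def cutoffTracked (A : ConjPNTA 2) : PathQ → ℕ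
  | PathQ.Einf => 2
  | PathQ.Efin => 1
  | PathQ.E => 2 * A.size 1 + 1
  | _ => 1

/-- Cutoff for the untracked template (part (ii)):
`1` for `E_inf`, `1` for `E_fin`, `2|U₂|` for `E`. -/
def cutoffOther (A : ConjPNTA 2) : PathQ → ℕ
  | PathQ.Einf => 1
  | PathQ.Efin => 1
  | PathQ.E => 2 * A.size 1
  | _ => 1

lemma cutoffTracked_pos (A : ConjPNTA 2) (Q : PathQ) : 0 < cutoffTracked A Q := by
  have := A.size_pos 1
  cases Q <;> simp only [cutoffTracked] <;> omega

lemma cutoffOther_pos (A : ConjPNTA 2) (Q : PathQ) : 0 < cutoffOther A Q := by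
  have := A.size_pos 1
  cases Q <;> simp only [cutoffOther] <;> omega

/-! ### Stuttering, reindexings and local computations -/

/-- `y` is a *stuttering* of `x`: it is obtained from `x` by inserting, between
consecutive elements, finitely many intermediate observations of the same states
with clocks advanced by small delays `δ`, without altering the original elements.
The map `m` sends a position of `y` to the position of `x` it refines. -/
def Stuttering {A : ConjPNTA k} {n : Fin k → ℕ} {c₀ : Config A n}
    (y x : TimedComp A n c₀) : Prop :=
  ∃ m : ℕ → ℕ, Monotone m ∧ m 0 = 0 ∧
    (∀ w, (y.seq w).isSome → (x.seq (m w)).isSome) ∧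
    (∀ w, y.seq w = none → ∃ v, x.seq v = none) ∧
    (∀ v, Set.Finite {w | (y.seq w).isSome ∧ m w = v}) ∧
    (∀ v, (x.seq v).isSome → ∃ w, m w = v ∧ y.seq w = x.seq v) ∧
    (∀ w cy ty cx tx, y.seq w = some (cy, ty) → x.seq (m w) = some (cx, tx) →
      tx ≤ ty ∧ cy.st = cx.st ∧ (∀ l i cxk, cy.cl l i cxk = cx.cl l i cxk + (ty - tx)) ∧
      ∀ cx' tx', x.seq (m w + 1) = some (cx', tx') → ty ≤ tx')

/-- A reindexing of positions between a timed computation `x` and a timed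
computation `y` obtained from `x` by collapsing some steps. -/
def Reindex {A : ConjPNTA k} {n n' : Fin k → ℕ} {c₀ : Config A n} {c₀' : Config A n'}
    (x : TimedComp A n c₀) (y : TimedComp A n' c₀') (m : ℕ → ℕ) : Prop :=
  Monotone m ∧ m 0 = 0 ∧
    (∀ v, (x.seq v).isSome → (y.seq (m v)).isSome) ∧
    (∀ w, (y.seq w).isSome → ∃ v, (x.seq v).isSome ∧ m v = w)

/-- The local timed computation of instance `(l, iy)` of `y` coincides (through the
reindexing `m`) with the local timed computation of instance `(l, ix)` of `x`:
same times, same states, same clock values. -/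
def LocalMatch {A : ConjPNTA k} {n n' : Fin k → ℕ} {c₀ : Config A n} {c₀' : Config A n'}
    (x : TimedComp A n c₀) (y : TimedComp A n' c₀') (m : ℕ → ℕ)
    (l : Fin k) (ix : Fin (n l)) (iy : Fin (n' l)) : Prop :=
  ∀ v c t c' t', x.seq v = some (c, t) → y.seq (m v) = some (c', t') →
    t' = t ∧ c'.st l iy = c.st l ix ∧ c'.cl l iy = c.cl l ix

/-- Instance `(l, i)` of `y` follows the idle local computation: it stutters in the
initial state `ŝ_l` with all its clocks equal to the elapsed time. -/
def IdleLocal {A : ConjPNTA k} {n : Fin k → ℕ} {c₀ : Config A n}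
    (y : TimedComp A n c₀) (l : Fin k) (i : Fin (n l)) : Prop :=
  ∀ v c t, y.seq v = some (c, t) → c.st l i = A.init l ∧ ∀ cx, c.cl l i cx = t

/-- The local computation of instance `(l, i)` of `x` is infinite: the instance takes
infinitely many (observable) synchronization steps. -/
def LocalInfinite {A : ConjPNTA k} {n : Fin k → ℕ} {c₀ : Config A n}
    (x : TimedComp A n c₀) (l : Fin k) (i : Fin (n l)) : Prop :=
  ∀ N, ∃ v, N ≤ v ∧ ∃ c t c' t', x.seq v = some (c, t) ∧ x.seq (v + 1) = some (c', t') ∧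
    t' = t ∧ ¬ (c'.st l i = c.st l i ∧ c'.cl l i = c.cl l i)

lemma two_le_two_succ (n : ℕ) (l : Fin 2) : two 1 n l ≤ two 1 (n + 1) l := by
  unfold two; split <;> omega

lemma c2two (A : ConjPNTA 2) {c₂ : ℕ} (hc : c₂ = 2 ∨ c₂ = 2 * A.size 1 + 1) : 1 < c₂ := by
  have := A.size_pos 1
  rcases hc with h | h <;> omega

lemma c2pos (A : ConjPNTA 2) {c₂ : ℕ} (hc : c₂ = 2 ∨ c₂ = 2 * A.size 1 + 1) : 0 < c₂ :=
  Nat.lt_of_lt_of_le Nat.one_pos (Nat.le_of_lt (c2two A hc))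

lemma npos (A : ConjPNTA 2) {c₂ n : ℕ} (hc : c₂ = 2 ∨ c₂ = 2 * A.size 1 + 1) (hn : c₂ ≤ n) :
    0 < n := Nat.lt_of_lt_of_le (c2pos A hc) hn

/-! ### Proof: projections of computations onto selected instances -/

/-- Projection of a configuration along a selection of instances. -/
def projC {A : ConjPNTA k} {n m : Fin k → ℕ} (f : ∀ l, Fin (m l) → Fin (n l))
    (c : Config A n) : Config A m where
  st := fun l i => c.st l (f l i)
  cl := fun l i => c.cl l (f l i)
  inv_sat := fun l i => c.inv_sat l (f l i)

/-- Projection of an s-path. -/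
def projP {A : ConjPNTA k} {n m : Fin k → ℕ} (f : ∀ l, Fin (m l) → Fin (n l))
    (ρ : SPath A n) : SPath A m where
  len := ρ.len
  toFun := fun s => projC f (ρ.toFun s)

lemma Config.ext_st_cl {A : ConjPNTA k} {n : Fin k → ℕ} {c c' : Config A n}
    (h₁ : c.st = c'.st) (h₂ : c.cl = c'.cl) : c = c' := by
  cases c; cases c'; simp only at h₁ h₂; subst h₁; subst h₂; rfl

lemma satIMTL_congr {A : ConjPNTA k} {n m : Fin k → ℕ} {α : Type}
    (v : α → Config A n → Prop) (v' : α → Config A m → Prop) (Φ : IMTL α) :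
    ∀ (ρ : SPath A n) (ρ' : SPath A m), ρ'.len = ρ.len →
      (∀ a s, v' a (ρ'.toFun s) ↔ v a (ρ.toFun s)) →
      (satIMTL v' Φ ρ' ↔ satIMTL v Φ ρ) := by
  induction Φ with
  | tt => intros; simp [satIMTL]
  | atom a => intro ρ ρ' _ h; exact h a 0
  | and φ ψ ih₁ ih₂ =>
    intro ρ ρ' hl h
    simp only [satIMTL]
    rw [ih₁ ρ ρ' hl h, ih₂ ρ ρ' hl h]
  | not φ ih =>
    intro ρ ρ' hl h
    simp only [satIMTL]
    rw [ih ρ ρ' hl h]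
  | untl op q φ ψ ih₁ ih₂ =>
    intro ρ ρ' hl h
    have e₁ : ∀ t, satIMTL v' φ (ρ'.suffix t) ↔ satIMTL v φ (ρ.suffix t) := fun t =>
      ih₁ _ _ (by simp [SPath.suffix, hl]) (fun a s => h a (t + s))
    have e₂ : ∀ t, satIMTL v' ψ (ρ'.suffix t) ↔ satIMTL v ψ (ρ.suffix t) := fun t =>
      ih₂ _ _ (by simp [SPath.suffix, hl]) (fun a s => h a (t + s))
    simp only [satIMTL, e₁, e₂, hl]

lemma delay_proj {A : ConjPNTA k} {n m : Fin k → ℕ} (f : ∀ l, Fin (m l) → Fin (n l))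
    {d : NNReal} {c c' : Config A n} (h : DelayStep d c c') :
    DelayStep d (projC f c) (projC f c') := by
  obtain ⟨h₁, h₂, h₃⟩ := h
  refine ⟨?_, fun l i x => h₂ l (f l i) x, fun l i d' hd => h₃ l (f l i) d' hd⟩
  simp [projC, h₁]

lemma sigma_ne {n m : Fin k → ℕ} {f : ∀ l, Fin (m l) → Fin (n l)}
    (hf : ∀ l, Function.Injective (f l)) {l : Fin k} {i : Fin (m l)} {q : Σ h, Fin (m h)}
    (hq : q ≠ ⟨l, i⟩) : (⟨q.1, f q.1 q.2⟩ : Σ h, Fin (n h)) ≠ ⟨l, f l i⟩ := by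
  obtain ⟨h, j⟩ := q
  intro e
  apply hq
  have e1 : h = l := congrArg Sigma.fst e
  subst e1
  simp only [Sigma.mk.injEq, heq_eq_eq, true_and] at e
  rw [hf _ e]

/-- Every step is owned by some instance: whenever that instance is selected, the step
projects to a step; otherwise the step projects to a step or is invisible. -/
lemma step_owner {A : ConjPNTA k} {n : Fin k → ℕ} (p₀ : Σ h, Fin (n h))
    {c c' : Config A n} {t t' : NNReal} (h : Step c c' t t') :
    ∃ p : Σ h, Fin (n h), ∀ (m : Fin k → ℕ) (f : ∀ l, Fin (m l) → Fin (n l)),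
      (∀ l, Function.Injective (f l)) → p.2 ∈ Set.range (f p.1) →
      Step (projC f c) (projC f c') t t' := by
  rcases h with ⟨d, hd, hD, ht⟩ | ⟨⟨l, i, tr, htr, h₁, h₂, h₃, h₄, h₅, h₆⟩, ht⟩
  · exact ⟨p₀, fun m f _ _ => Or.inl ⟨d, hd, delay_proj f hD, ht⟩⟩
  · refine ⟨⟨l, i⟩, fun m f hf hr => Or.inr ⟨?_, ht⟩⟩
    have hr' : ∃ i', f l i' = i := hr
    obtain ⟨i', rfl⟩ := hr'
    refine ⟨l, i', tr, htr, h₁, h₂, ?_, h₄, h₅, ?_⟩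
    · intro q hq
      exact h₃ ⟨q.1, f q.1 q.2⟩ (sigma_ne hf hq)
    · intro q hq
      exact h₆ ⟨q.1, f q.1 q.2⟩ (sigma_ne hf hq)

lemma step_proj {A : ConjPNTA k} {n m : Fin k → ℕ} (f : ∀ l, Fin (m l) → Fin (n l))
    (hf : ∀ l, Function.Injective (f l)) {c c' : Config A n} {t t' : NNReal}
    (h : Step c c' t t') :
    Step (projC f c) (projC f c') t t' ∨ (projC f c' = projC f c ∧ t' = t) := by
  have h0 := h
  rcases h with ⟨d, hd, hD, ht⟩ | ⟨⟨l, i, tr, htr, h₁, h₂, h₃, h₄, h₅, h₆⟩, ht⟩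
  · exact Or.inl (Or.inl ⟨d, hd, delay_proj f hD, ht⟩)
  · by_cases hr : i ∈ Set.range (f l)
    · left
      obtain ⟨i', rfl⟩ := hr
      refine Or.inr ⟨⟨l, i', tr, htr, h₁, h₂, ?_, h₄, h₅, ?_⟩, ht⟩
      · intro q hq
        exact h₃ ⟨q.1, f q.1 q.2⟩ (sigma_ne hf hq)
      · intro q hq
        exact h₆ ⟨q.1, f q.1 q.2⟩ (sigma_ne hf hq)
    · right
      have key : ∀ (l' : Fin k) (j : Fin (m l')),
          c'.st l' (f l' j) = c.st l' (f l' j) ∧ c'.cl l' (f l' j) = c.cl l' (f l' j) := by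
        intro l' j
        refine h₆ ⟨l', f l' j⟩ ?_
        intro e
        have e1 : l' = l := congrArg Sigma.fst e
        subst e1
        simp only [Sigma.mk.injEq, heq_eq_eq, true_and] at e
        exact hr ⟨j, e⟩
      refine ⟨Config.ext_st_cl ?_ ?_, ht⟩
      · funext h j; exact (key h j).1
      · funext h j; exact (key h j).2

/-- The step of `x` at position `v` projects to a genuine step. -/
def VisStep {A : ConjPNTA k} {n m : Fin k → ℕ} {c₀ : Config A n} (x : TimedComp A n c₀)
    (f : ∀ l, Fin (m l) → Fin (n l)) (v : ℕ) : Prop :=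
  ∃ c t c' t', x.seq v = some (c, t) ∧ x.seq (v + 1) = some (c', t') ∧
    Step (projC f c) (projC f c') t t'

lemma seq_mono {A : ConjPNTA k} {n : Fin k → ℕ} {c₀ : Config A n} (x : TimedComp A n c₀)
    {u v : ℕ} (huv : u ≤ v) (h : (x.seq v).isSome) : (x.seq u).isSome := by
  induction huv with
  | refl => exact h
  | step _ ih => exact ih (x.downward _ h)

lemma exists_some {A : ConjPNTA k} {n : Fin k → ℕ} {c₀ : Config A n} (x : TimedComp A n c₀)
    {v : ℕ} (h : (x.seq v).isSome) : ∃ c t, x.seq v = some (c, t) := by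
  obtain ⟨⟨c, t⟩, h⟩ := Option.isSome_iff_exists.1 h
  exact ⟨c, t, h⟩

open Classical in
lemma count_key {A : ConjPNTA k} {n m : Fin k → ℕ} {c₀ : Config A n} (x : TimedComp A n c₀)
    (f : ∀ l, Fin (m l) → Fin (n l)) (hf : ∀ l, Function.Injective (f l)) {u : ℕ}
    {c : Config A n} {t : NNReal} (hu : x.seq u = some (c, t)) :
    ∀ (d : ℕ) (c' : Config A n) (t' : NNReal), x.seq (u + d) = some (c', t') →
      Nat.count (VisStep x f) (u + d) = Nat.count (VisStep x f) u →
      projC f c' = projC f c ∧ t' = t := by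
  intro d
  induction d with
  | zero =>
    intro c' t' h _
    rw [Nat.add_zero, hu] at h
    simp only [Option.some.injEq, Prod.mk.injEq] at h
    obtain ⟨rfl, rfl⟩ := h
    exact ⟨rfl, rfl⟩
  | succ d ih =>
    intro c' t' h hc
    obtain ⟨c₁, t₁, h₁⟩ := exists_some x (v := u + d) (x.downward _ (by rw [← add_assoc] at h; simp [h]))
    rw [← add_assoc] at h hc
    rw [Nat.count_succ] at hc
    have hmono : Nat.count (VisStep x f) u ≤ Nat.count (VisStep x f) (u + d) :=
      Nat.count_monotone _ (Nat.le_add_right _ _)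
    have hnv : ¬ VisStep x f (u + d) := by
      intro hv; rw [if_pos hv] at hc; omega
    rw [if_neg hnv, add_zero] at hc
    obtain ⟨e₁, e₂⟩ := ih c₁ t₁ h₁ hc
    rcases step_proj f hf (x.step _ _ _ _ _ h₁ h) with hs | ⟨g₁, g₂⟩
    · exact absurd ⟨c₁, t₁, c', t', h₁, h, hs⟩ hnv
    · exact ⟨g₁.trans e₁, g₂.trans e₂⟩

open Classical in
lemma count_key' {A : ConjPNTA k} {n m : Fin k → ℕ} {c₀ : Config A n} (x : TimedComp A n c₀)
    (f : ∀ l, Fin (m l) → Fin (n l)) (hf : ∀ l, Function.Injective (f l)) {u v : ℕ}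
    {c c' : Config A n} {t t' : NNReal} (hu : x.seq u = some (c, t))
    (hv : x.seq v = some (c', t'))
    (hc : Nat.count (VisStep x f) v = Nat.count (VisStep x f) u) :
    projC f c' = projC f c ∧ t' = t := by
  rcases le_total u v with h | h
  · obtain ⟨d, rfl⟩ := Nat.exists_eq_add_of_le h
    exact count_key x f hf hu d c' t' hv hc
  · obtain ⟨d, rfl⟩ := Nat.exists_eq_add_of_le h
    have := count_key x f hf hv d c t hu hc.symm
    exact ⟨this.1.symm, this.2.symm⟩

open Classical in
lemma count_pred (P : ℕ → Prop) (w : ℕ) : ∀ v, Nat.count P v = w + 1 →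
    ∃ u, u < v ∧ P u ∧ Nat.count P u = w := by
  intro v
  induction v with
  | zero => intro h; simp at h
  | succ v ih =>
    intro h
    rw [Nat.count_succ] at h
    by_cases hp : P v
    · rw [if_pos hp] at h
      exact ⟨v, Nat.lt_succ_self v, hp, by omega⟩
    · rw [if_neg hp] at h
      obtain ⟨u, h₁, h₂, h₃⟩ := ih (by omega)
      exact ⟨u, by omega, h₂, h₃⟩

lemma exists_last {A : ConjPNTA k} {n : Fin k → ℕ} {c₀ : Config A n} (x : TimedComp A n c₀)
    (h : ¬ x.Infinite) : ∃ v c t, x.seq v = some (c, t) ∧ x.seq (v + 1) = none := by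
  classical
  by_contra hcon
  apply h
  intro v
  induction v with
  | zero => simp [x.zero_def]
  | succ v ih =>
    obtain ⟨c, t, hc⟩ := exists_some x ih
    by_contra hn
    exact hcon ⟨v, c, t, hc, by simpa using hn⟩

open Classical in
/-- The projected (collapsed) computation. -/
lemma exists_proj {A : ConjPNTA k} {n m : Fin k → ℕ} {c₀ : Config A n} (x : TimedComp A n c₀)
    (f : ∀ l, Fin (m l) → Fin (n l)) (hf : ∀ l, Function.Injective (f l))
    (hinf : x.Infinite → {v | VisStep x f v}.Infinite) (ρ : SPath A n) (hρ : Induces x ρ) :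
    ∃ y : TimedComp A m (projC f c₀), Induces y (projP f ρ) ∧ (x.Infinite → y.Infinite) ∧
      (∀ v c t, x.seq v = some (c, t) → x.seq (v + 1) = none →
        ∃ w, y.seq w = some (projC f c, t) ∧ y.seq (w + 1) = none) := by
  set N : ℕ → ℕ := fun v => Nat.count (VisStep x f) v with hN
  -- the sequence
  have hex : ∀ w, ∃ o : Option (Config A m × NNReal),
      (∀ v c t, x.seq v = some (c, t) → N v = w → o = some (projC f c, t)) ∧
      (∀ r, o = some r → ∃ v c t, x.seq v = some (c, t) ∧ N v = w ∧ r = (projC f c, t)) := by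
    intro w
    by_cases h : ∃ v c t, x.seq v = some (c, t) ∧ N v = w
    · obtain ⟨v, c, t, hv, hw⟩ := h
      refine ⟨some (projC f c, t), ?_, ?_⟩
      · intro v' c' t' hv' hw'
        obtain ⟨e₁, e₂⟩ := count_key' x f hf hv hv' (hw'.trans hw.symm)
        rw [e₁, e₂]
      · intro r hr
        exact ⟨v, c, t, hv, hw, (Option.some.inj hr).symm⟩
    · refine ⟨none, ?_, ?_⟩
      · intro v c t hv hw
        exact absurd ⟨v, c, t, hv, hw⟩ h
      · intro r hr; cases hr
  choose s hs₁ hs₂ using hex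
  have hat : ∀ v c t, x.seq v = some (c, t) → s (N v) = some (projC f c, t) :=
    fun v c t h => hs₁ _ v c t h rfl
  -- predecessors
  have hpred : ∀ w r, s (w + 1) = some r → ∃ u c t c' t', x.seq u = some (c, t) ∧
      x.seq (u + 1) = some (c', t') ∧ Step (projC f c) (projC f c') t t' ∧
      s w = some (projC f c, t) ∧ r = (projC f c', t') := by
    intro w r hr
    obtain ⟨v, c₁, t₁, hv, hw, rfl⟩ := hs₂ _ _ hr
    obtain ⟨u, huv, ⟨c, t, c', t', h₁, h₂, h₃⟩, hu⟩ := count_pred _ _ _ hw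
    refine ⟨u, c, t, c', t', h₁, h₂, h₃, hs₁ w u c t h₁ hu, ?_⟩
    have hN1 : N (u + 1) = w + 1 := by
      simp only [hN]
      rw [Nat.count_succ, if_pos ⟨c, t, c', t', h₁, h₂, h₃⟩, hu]
    have := hs₁ (w + 1) (u + 1) c' t' h₂ hN1
    rw [hr] at this
    exact Option.some.inj this
  let y : TimedComp A m (projC f c₀) :=
    { seq := s
      zero_def := by
        have := hat 0 c₀ 0 x.zero_def
        simpa [hN] using this
      downward := by
        intro w h
        obtain ⟨r, hr⟩ := Option.isSome_iff_exists.1 h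
        obtain ⟨u, c, t, c', t', _, _, _, h, _⟩ := hpred w r hr
        simp [h]
      step := by
        intro w c₁ t₁ c₂ t₂ h₁ h₂
        obtain ⟨u, c, t, c', t', _, _, hst, h, e⟩ := hpred w _ h₂
        rw [h₁] at h
        simp only [Option.some.injEq, Prod.mk.injEq] at h e
        obtain ⟨rfl, rfl⟩ := h
        obtain ⟨rfl, rfl⟩ := e
        exact hst }
  have hyinf : x.Infinite → y.Infinite := by
    intro hx w
    obtain ⟨v, hv⟩ : ∃ v, N v = w :=
      ⟨Nat.nth (VisStep x f) w, Nat.count_nth_of_infinite (hinf hx) w⟩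
    obtain ⟨c, t, h⟩ := exists_some x (hx v)
    have := hs₁ w v c t h hv
    change (s w).isSome
    simp [this]
  have hlast : ∀ v c t, x.seq v = some (c, t) → x.seq (v + 1) = none → s (N v + 1) = none := by
    intro v c t hv hn
    by_contra hne
    obtain ⟨r, hr⟩ := Option.ne_none_iff_exists'.1 hne
    obtain ⟨u, c', t', hu, hNu, _⟩ := hs₂ _ _ hr
    have huv : u ≤ v := by
      by_contra hlt
      have := seq_mono x (u := v + 1) (v := u) (by omega) (by simp [hu])
      simp [hn] at this
    have : N u ≤ N v := Nat.count_monotone _ huv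
    omega
  have hyinf' : y.Infinite → x.Infinite := by
    intro hy
    by_contra hx
    obtain ⟨v, c, t, hv, hn⟩ := exists_last x hx
    have := hy (N v + 1)
    change (s (N v + 1)).isSome at this
    rw [hlast v c t hv hn] at this
    simp at this
  refine ⟨y, ⟨?_, ?_, ?_⟩, hyinf, ?_⟩
  · intro w c₁ t₁ c₂ t₂ h₁ h₂ τ hτ₁ hτ₂
    change s w = _ at h₁
    obtain ⟨u, c, t, c', t', hu, hu', _, h, e⟩ := hpred w _ h₂
    rw [h₁] at h
    simp only [Option.some.injEq, Prod.mk.injEq] at h e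
    obtain ⟨rfl, rfl⟩ := h
    obtain ⟨rfl, rfl⟩ := e
    obtain ⟨g₁, g₂⟩ := hρ.1 u c t₁ c' t₂ hu hu' τ hτ₁ hτ₂
    refine ⟨?_, fun l i cx => g₂ l (f l i) cx⟩
    funext l i
    exact congrFun (congrFun g₁ l) (f l i)
  · intro hy
    have hx := hyinf' hy
    change ρ.len = _
    rw [hρ.2.1 hx]
    have hsurj : Function.Surjective N := fun w =>
      ⟨Nat.nth (VisStep x f) w, Nat.count_nth_of_infinite (hinf hx) w⟩
    refine hsurj.iSup_congr N ?_
    intro v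
    obtain ⟨c, t, h⟩ := exists_some x (hx v)
    have h' := hat v c t h
    have : y.seq (N v) = some (projC f c, t) := h'
    simp [TimedComp.timeAt, h, this]
  · intro w c₁ t₁ h₁ h₂
    change s w = _ at h₁
    change s (w + 1) = _ at h₂
    have hx : ¬ x.Infinite := by
      intro hx
      have := hyinf hx (w + 1)
      change (s (w + 1)).isSome at this
      simp [h₂] at this
    obtain ⟨v, c, t, hv, hn⟩ := exists_last x hx
    have hl := hlast v c t hv hn
    have hw : N v = w := by
      have a₁ : ¬ (N v < w) := by
        intro hlt
        have := seq_mono y (u := N v + 1) (v := w) (by omega) (by change (s w).isSome; simp [h₁])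
        change (s (N v + 1)).isSome at this
        simp [hl] at this
      have a₂ : ¬ (w < N v) := by
        intro hlt
        have := seq_mono y (u := w + 1) (v := N v) (by omega)
          (by change (s (N v)).isSome; simp [hat v c t hv])
        change (s (w + 1)).isSome at this
        simp [h₂] at this
      omega
    have h' := hat v c t hv
    rw [hw, h₁] at h'
    simp only [Option.some.injEq, Prod.mk.injEq] at h'
    obtain ⟨rfl, rfl⟩ := h'
    obtain ⟨g₀, g₁, g₂⟩ := hρ.2.2 v c t₁ hv hn
    refine ⟨g₀, ?_, fun l i cx => g₂ l (f l i) cx⟩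
    funext l i
    exact congrFun (congrFun g₁ l) (f l i)
  · intro v c t hv hn
    exact ⟨N v, hat v c t hv, hlast v c t hv hn⟩

/-! ### Proof: deadlocks -/

lemma exists_blocker {A : ConjPNTA k} {n : Fin k → ℕ} (p₀ : Σ h, Fin (n h)) (c : Config A n)
    (h : ∀ c' : Config A n, ¬ ∃ d : NNReal, 0 < d ∧ DelayStep d c c') :
    ∃ p : Σ h, Fin (n h), ∀ d : NNReal, 0 < d → ∃ d' ≤ d,
      ¬ (A.inv p.1 (c.st p.1 p.2)).sat fun x => c.cl p.1 p.2 x + d' := by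
  by_contra hcon
  push Not at hcon
  choose D hD₁ hD₂ using hcon
  have : Nonempty (Σ h, Fin (n h)) := ⟨p₀⟩
  obtain ⟨q, hq⟩ := Finite.exists_min D
  have hsat : ∀ l i (d' : NNReal), d' ≤ D q →
      (A.inv l (c.st l i)).sat fun x => c.cl l i x + d' :=
    fun l i d' hd => hD₂ ⟨l, i⟩ d' (hd.trans (hq ⟨l, i⟩))
  exact h ⟨c.st, fun l i x => c.cl l i x + D q, fun l i => hsat l i _ le_rfl⟩
    ⟨D q, hD₁ q, rfl, fun _ _ _ => rfl, hsat⟩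

lemma deadlock_proj {A : ConjPNTA k} {n m : Fin k → ℕ} (f : ∀ l, Fin (m l) → Fin (n l))
    (c : Config A n)
    (hdead : ∀ c' : Config A n, ¬ ((∃ d : NNReal, 0 < d ∧ DelayStep d c c') ∨ SyncStep c c'))
    (b : Σ h, Fin (n h)) (hb : ∀ d : NNReal, 0 < d → ∃ d' ≤ d,
      ¬ (A.inv b.1 (c.st b.1 b.2)).sat fun x => c.cl b.1 b.2 x + d')
    (hbr : b.2 ∈ Set.range (f b.1))
    (hsel : ∀ l (i : Fin (m l)) (p : Σ h, Fin (n h)), p ≠ ⟨l, f l i⟩ →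
      ∃ q : Fin (m p.1), (⟨p.1, q⟩ : Σ h, Fin (m h)) ≠ ⟨l, i⟩ ∧
        c.st p.1 (f p.1 q) = c.st p.1 p.2) :
    ∀ c' : Config A m, ¬ ((∃ d : NNReal, 0 < d ∧ DelayStep d (projC f c) c') ∨
      SyncStep (projC f c) c') := by
  classical
  rintro c' (⟨d, hd, -, -, hD⟩ | ⟨l, i, tr, htr, h₁, h₂, h₃, h₄, h₅, h₆⟩)
  · obtain ⟨d', hd', hns⟩ := hb d hd
    obtain ⟨j, hj⟩ := hbr
    apply hns
    have := hD b.1 j d' hd'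
    simpa only [projC, hj] using this
  · let S : ∀ p : Σ h, Fin (n h), A.State p.1 :=
      Function.update (fun p => c.st p.1 p.2) ⟨l, f l i⟩ (c'.st l i)
    let V : ∀ p : Σ h, Fin (n h), A.Clock p.1 → NNReal :=
      Function.update (fun p => c.cl p.1 p.2) ⟨l, f l i⟩ (c'.cl l i)
    have hS : S ⟨l, f l i⟩ = c'.st l i := Function.update_self _ _ _
    have hV : V ⟨l, f l i⟩ = c'.cl l i := Function.update_self _ _ _
    have hS' : ∀ p, p ≠ ⟨l, f l i⟩ → S p = c.st p.1 p.2 := fun p hp =>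
      Function.update_of_ne hp _ _
    have hV' : ∀ p, p ≠ ⟨l, f l i⟩ → V p = c.cl p.1 p.2 := fun p hp =>
      Function.update_of_ne hp _ _
    have hinv : ∀ p, (A.inv p.1 (S p)).sat (V p) := by
      intro p
      by_cases hp : p = ⟨l, f l i⟩
      · subst hp
        rw [hS, hV]
        exact c'.inv_sat l i
      · rw [hS' p hp, hV' p hp]
        exact c.inv_sat p.1 p.2
    refine hdead ⟨fun l i => S ⟨l, i⟩, fun l i => V ⟨l, i⟩, fun l i => hinv ⟨l, i⟩⟩ (Or.inr ?_)
    refine ⟨l, f l i, tr, htr, h₁, h₂, ?_, ?_, ?_, ?_⟩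
    · intro p hp
      obtain ⟨q, hq, e⟩ := hsel l i p hp
      rw [← e]
      exact h₃ ⟨p.1, q⟩ hq
    · exact hS.trans h₄
    · intro z
      simp only [hV]
      exact h₅ z
    · intro p hp
      exact ⟨hS' p hp, hV' p hp⟩

/-! ### Proof: selection of instances -/

lemma exists_inj_of_finset {n m : ℕ} (hmn : m ≤ n) (T : Finset (Fin n)) (hT : T.card ≤ m) :
    ∃ g : Fin m → Fin n, Function.Injective g ∧ ∀ j ∈ T, j ∈ Set.range g := by
  obtain ⟨u, hu, hcard⟩ := Finset.exists_superset_card_eq hT (by simpa using hmn)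
  refine ⟨u.orderEmbOfFin hcard, (u.orderEmbOfFin hcard).injective, fun j hj => ?_⟩
  rw [Finset.range_orderEmbOfFin]
  exact hu hj

lemma exists_sel {S : Type} [Fintype S] {n : ℕ} (st : Fin n → S) (b : Fin n)
    (hn : 2 * Fintype.card S ≤ n) :
    ∃ g : Fin (2 * Fintype.card S) → Fin n, Function.Injective g ∧ b ∈ Set.range g ∧
      ∀ (i j : Fin n), j ≠ i → ∃ q, g q ≠ i ∧ st (g q) = st j := by
  classical
  have hT : ∀ s : S, ∃ T : Finset (Fin n), (∀ j ∈ T, st j = s) ∧ (st b = s → b ∈ T) ∧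
      T.card ≤ 2 ∧ (T.card = 2 ∨ ∀ j, st j = s → j ∈ T) := by
    intro s
    set F := Finset.univ.filter (fun j => st j = s) with hF
    have hB : (Finset.univ.filter (fun j => st j = s ∧ j = b)) ⊆ F := by
      intro j; simp only [hF, Finset.mem_filter, Finset.mem_univ, true_and]; exact fun h => h.1
    have hB1 : (Finset.univ.filter (fun j => st j = s ∧ j = b)).card ≤ 1 := by
      apply Finset.card_le_one.2
      intro a ha a' ha'
      simp only [Finset.mem_filter, Finset.mem_univ, true_and] at ha ha'
      rw [ha.2, ha'.2]
    obtain ⟨T, h₁, h₂, h₃⟩ := Finset.exists_subsuperset_card_eq (n := min 2 F.card) hB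
      (le_min (by omega) (Finset.card_le_card hB)) (min_le_right _ _)
    refine ⟨T, ?_, ?_, ?_, ?_⟩
    · intro j hj
      have := h₂ hj
      simpa [hF] using this
    · intro hb
      apply h₁
      simp [hb]
    · rw [h₃]; exact min_le_left _ _
    · by_cases hc : 2 ≤ F.card
      · left; rw [h₃]; omega
      · right
        have : T = F := Finset.eq_of_subset_of_card_le h₂ (by rw [h₃]; omega)
        intro j hj
        rw [this]; simp [hF, hj]
  choose T hT₁ hT₂ hT₃ hT₄ using hT
  obtain ⟨g, hg, hgr⟩ := exists_inj_of_finset hn (Finset.univ.biUnion T) (by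
    refine (Finset.card_biUnion_le_card_mul _ _ 2 (fun s _ => hT₃ s)).trans ?_
    rw [Finset.card_univ, mul_comm])
  have hmem : ∀ s, ∀ j ∈ T s, j ∈ Set.range g := fun s j hj =>
    hgr j (Finset.mem_biUnion.2 ⟨s, Finset.mem_univ _, hj⟩)
  refine ⟨g, hg, hmem _ b (hT₂ _ rfl), ?_⟩
  intro i j hji
  rcases hT₄ (st j) with h2 | hall
  · obtain ⟨a, ha, hai⟩ := Finset.exists_mem_ne (by omega : 1 < (T (st j)).card) i
    obtain ⟨q, rfl⟩ := hmem _ a ha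
    exact ⟨q, hai, hT₁ _ _ ha⟩
  · obtain ⟨q, hq⟩ := hmem _ j (hall j rfl)
    exact ⟨q, by rw [hq]; exact hji, by rw [hq]⟩

/-- The selection of instances of `(U₁,U₂)^{(1,n)}` keeping the first template. -/
def sel2 {m n : ℕ} (g : Fin m → Fin n) : ∀ l : Fin 2, Fin (two 1 m l) → Fin (two 1 n l)
  | 0 => fun i => i
  | 1 => g

lemma sel2_inj {m n : ℕ} (g : Fin m → Fin n) (hg : Function.Injective g) :
    ∀ l, Function.Injective (sel2 g l)
  | 0 => fun _ _ h => h
  | 1 => hg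

lemma exists_sel_mem {m n : ℕ} (hm : 0 < m) (hmn : m ≤ n) (p : Σ h : Fin 2, Fin (two 1 n h)) :
    ∃ g : Fin m → Fin n, Function.Injective g ∧ p.2 ∈ Set.range (sel2 g p.1) := by
  obtain ⟨l, i⟩ := p
  match l, i with
  | 0, i =>
    obtain ⟨g, hg, -⟩ := exists_inj_of_finset hmn ∅ (by simp)
    exact ⟨g, hg, i, rfl⟩
  | 1, i =>
    obtain ⟨i', hi'⟩ : ∃ i' : Fin n, i' = i := ⟨i, rfl⟩
    obtain ⟨g, hg, h⟩ := exists_inj_of_finset hmn {i'} (by rw [Finset.card_singleton]; exact hm)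
    obtain ⟨q, hq⟩ := h i' (Finset.mem_singleton_self i')
    exact ⟨g, hg, q, hq.trans hi'⟩

lemma sat_proj {A : ConjPNTA 2} (Φ : IMTL (A.State 0)) {m n : ℕ} (g : Fin m → Fin n)
    (ρ : SPath A (two 1 n)) (h : satIMTL (valFirst A (two 1 n) 0 Nat.one_pos) Φ ρ) :
    satIMTL (valFirst A (two 1 m) 0 Nat.one_pos) Φ (projP (sel2 g) ρ) :=
  (satIMTL_congr (valFirst A (two 1 n) 0 Nat.one_pos) (valFirst A (two 1 m) 0 Nat.one_pos) Φ ρ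
    (projP (sel2 g) ρ) rfl (fun _ _ => Iff.rfl)).2 h

lemma infinite_case {A : ConjPNTA 2} {m n : ℕ} (hm : 0 < m) (hmn : m ≤ n)
    (ρ : SPath A (two 1 n)) (h : ρ.IsInfiniteFrom (initConfig A (two 1 n))) :
    ∃ g : Fin m → Fin n, (projP (sel2 g) ρ).IsInfiniteFrom (initConfig A (two 1 m)) := by
  obtain ⟨x, hx, hinf⟩ := h
  have hown : ∀ v, ∃ p : Σ h, Fin (two 1 n h), ∀ g : Fin m → Fin n, Function.Injective g →
      p.2 ∈ Set.range (sel2 g p.1) → VisStep x (sel2 g) v := by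
    intro v
    obtain ⟨c, t, h₁⟩ := exists_some x (hinf v)
    obtain ⟨c', t', h₂⟩ := exists_some x (hinf (v + 1))
    obtain ⟨p, hp⟩ := step_owner ⟨0, ⟨0, Nat.one_pos⟩⟩ (x.step _ _ _ _ _ h₁ h₂)
    exact ⟨p, fun g hg hr => ⟨c, t, c', t', h₁, h₂, hp _ _ (sel2_inj g hg) hr⟩⟩
  choose P hP using hown
  obtain ⟨p, hp⟩ := Finite.exists_infinite_fiber P
  obtain ⟨g, hg, hr⟩ := exists_sel_mem hm hmn p
  obtain ⟨y, hy, hyinf, -⟩ := exists_proj x (sel2 g) (sel2_inj g hg) (fun _ => by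
    refine (Set.infinite_coe_iff.1 hp).mono ?_
    intro v hv
    have hv : P v = p := hv
    exact hP v g hg (by rw [hv]; exact hr)) ρ hx
  exact ⟨g, y, hy, hyinf hinf⟩

lemma finite_case {A : ConjPNTA 2} {m n : ℕ} (hm : 0 < m) (hmn : m ≤ n)
    (ρ : SPath A (two 1 n)) (h : ρ.IsFiniteFrom (initConfig A (two 1 n))) :
    ∃ g : Fin m → Fin n, (projP (sel2 g) ρ).IsFiniteFrom (initConfig A (two 1 m)) := by
  obtain ⟨x, hx, v, hv⟩ := h
  have hninf : ¬ x.Infinite := fun hi => by have := hi v; simp [hv] at this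
  obtain ⟨g, hg, -⟩ := exists_sel_mem hm hmn ⟨0, ⟨0, Nat.one_pos⟩⟩
  obtain ⟨y, hy, -, hfin⟩ := exists_proj x (sel2 g) (sel2_inj g hg)
    (fun hi => absurd hi hninf) ρ hx
  obtain ⟨v, c, t, h₁, h₂⟩ := exists_last x hninf
  obtain ⟨w, -, hw⟩ := hfin v c t h₁ h₂
  exact ⟨g, y, hy, w + 1, hw⟩

lemma deadlock_case {A : ConjPNTA 2} {n : ℕ} (hmn : 2 * A.size 1 ≤ n)
    (ρ : SPath A (two 1 n)) (h : ρ.IsDeadlockedFrom (initConfig A (two 1 n))) :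
    ∃ g : Fin (2 * A.size 1) → Fin n,
      (projP (sel2 g) ρ).IsDeadlockedFrom (initConfig A (two 1 (2 * A.size 1))) := by
  obtain ⟨x, hx, v, c, t, h₁, h₂, hdead⟩ := h
  have hninf : ¬ x.Infinite := fun hi => by have := hi (v + 1); simp [h₂] at this
  obtain ⟨b, hb⟩ := exists_blocker ⟨0, ⟨0, Nat.one_pos⟩⟩ c
    (fun c' hc' => hdead c' (Or.inl hc'))
  have hnpos : 0 < n := by have := A.size_pos 1; omega
  let _ := A.stateFintype 1
  have hsel : ∃ g : Fin (2 * A.size 1) → Fin n, Function.Injective g ∧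
      b.2 ∈ Set.range (sel2 g b.1) ∧
      ∀ (i j : Fin n), j ≠ i → ∃ q, g q ≠ i ∧
        (c.st 1 : Fin n → A.State 1) (g q) = (c.st 1 : Fin n → A.State 1) j := by
    obtain ⟨l, i⟩ := b
    match l, i with
    | 0, i =>
      obtain ⟨g, hg, -, hs⟩ := exists_sel (c.st 1 : Fin n → A.State 1) ⟨0, hnpos⟩ hmn
      exact ⟨g, hg, ⟨i, rfl⟩, hs⟩
    | 1, i =>
      obtain ⟨g, hg, hr, hs⟩ := exists_sel (c.st 1 : Fin n → A.State 1) i hmn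
      exact ⟨g, hg, hr, hs⟩
  obtain ⟨g, hg, hbr, hs⟩ := hsel
  obtain ⟨y, hy, -, hfin⟩ := exists_proj x (sel2 g) (sel2_inj g hg)
    (fun hi => absurd hi hninf) ρ hx
  obtain ⟨w, hw, hw'⟩ := hfin v c t h₁ h₂
  refine ⟨g, y, hy, w, _, t, hw, hw', deadlock_proj (sel2 g) c hdead b hb hbr ?_⟩
  rintro l i ⟨l', j⟩ hp
  match l, i, l', j, hp with
  | 0, i, 0, j, hp =>
    exact absurd (by rw [show j = sel2 g 0 i from Subsingleton.elim (α := Fin 1) _ _]) hp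
  | 0, i, 1, j, hp =>
    have hm0 : 0 < 2 * A.size 1 := by have := A.size_pos 1; omega
    -- pick a representative of the state of `j`
    by_cases hj : ∃ q, g q = j
    · obtain ⟨q, hq⟩ := hj
      exact ⟨q, fun e => absurd (congrArg Sigma.fst e) (show ¬ (1 : Fin 2) = 0 by decide), by
        change (c.st 1 : Fin n → A.State 1) (g q) = _; rw [hq]⟩
    · obtain ⟨q, -, hq⟩ := hs (g ⟨0, hm0⟩) j (fun e => hj ⟨_, e.symm⟩)
      exact ⟨q, fun e => absurd (congrArg Sigma.fst e) (show ¬ (1 : Fin 2) = 0 by decide), hq⟩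
  | 1, i, 0, j, hp =>
    exact ⟨j, fun e => absurd (congrArg Sigma.fst e) (show ¬ (0 : Fin 2) = 1 by decide), rfl⟩
  | 1, i, 1, j, hp =>
    obtain ⟨q, hq₁, hq₂⟩ := hs (g i) j (by intro e; exact hp (by rw [e]; rfl))
    refine ⟨q, ?_, hq₂⟩
    intro e
    exact hq₁ (congrArg g (eq_of_heq (Sigma.mk.inj e).2))

-- STATEMENT 6
theorem conjunctive_bounding_ii (A : ConjPNTA 2) (Φ : IMTL (A.State 0))
    (Q : PathQ) (hQ : Q = PathQ.E ∨ Q = PathQ.Einf ∨ Q = PathQ.Efin)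
    (n : ℕ) (hn : cutoffOther A Q ≤ n) :
    SatQ A (two 1 n) (valFirst A (two 1 n) 0 Nat.one_pos) Q Φ →
      SatQ A (two 1 (cutoffOther A Q))
        (valFirst A (two 1 (cutoffOther A Q)) 0 Nat.one_pos) Q Φ := by
  intro h
  rcases hQ with rfl | rfl | rfl
  · obtain ⟨ρ, hρ | hρ, hs⟩ := h
    · obtain ⟨g, hg⟩ := infinite_case (cutoffOther_pos A PathQ.E) hn ρ hρ
      exact ⟨_, Or.inl hg, sat_proj Φ g ρ hs⟩
    · obtain ⟨g, hg⟩ := deadlock_case hn ρ hρ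
      exact ⟨_, Or.inr hg, sat_proj Φ g ρ hs⟩
  · obtain ⟨ρ, hρ, hs⟩ := h
    obtain ⟨g, hg⟩ := infinite_case (cutoffOther_pos A PathQ.Einf) hn ρ hρ
    exact ⟨_, hg, sat_proj Φ g ρ hs⟩
  · obtain ⟨ρ, hρ, hs⟩ := h
    obtain ⟨g, hg⟩ := finite_case (cutoffOther_pos A PathQ.Efin) hn ρ hρ
    exact ⟨_, hg, sat_proj Φ g ρ hs⟩

end PNTA
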